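/- Let A, B, C, D be smooth functions on an open set U ⊆ ℝ² and let c ∈ ℝ be such that K² + K_x·ρ₂ − K_y·ρ₁ = c identically on U. Then on the open set U' = {p ∈ U : K(p)² ≠ c}, the one-form σ = σ₁dx + σ₂dy with σ₁ = ρ₁/(c − K²) and σ₂ = ρ₂/(c − K²) satisfies ∂_xσ₂ − ∂_yσ₁ = 0 (σ is closed) and K_x·σ₂ − K_y·σ₁ = 1 (i.e. dK ∧ σ = Ω), so that K together with any local primitive of σ form canonical (action–angle) coordinates. -/

import Mathlib

/-!
Writing `dK ∧ ρ = (K_x ρ₂ - K_y ρ₁) Ω`, the hypothesis says `dK ∧ ρ = (c - K²) Ω`, which is the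
identity `dK ∧ σ = Ω` after division by `c - K²`. For closedness, the key fact is that `K` is the
potential of the curvature one-form in the sense that `dρ = -2 K Ω` (`px_rho2_sub_py_rho1`): this
holds for every symplectic connection, by expanding the derivatives and using the symmetry of mixed
partial derivatives. Then
`dσ = dρ / (c - K²) + 2 K dK ∧ ρ / (c - K²)² = (-2 K / (c - K²) + 2 K / (c - K²)) Ω = 0`.
-/

set_option linter.unusedVariables false

noncomputable section

/-- Partial derivative with respect to the first variable. -/
def px (f : ℝ → ℝ → ℝ) : ℝ → ℝ → ℝ := fun x y => deriv (fun s => f s y) x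

/-- Partial derivative with respect to the second variable. -/
def py (f : ℝ → ℝ → ℝ) : ℝ → ℝ → ℝ := fun x y => deriv (fun s => f x s) y

/-- Smoothness on a subset of the plane, for a curried function of two real variables. -/
def SmoothOn2 (f : ℝ → ℝ → ℝ) (U : Set (ℝ × ℝ)) : Prop :=
  ContDiffOn ℝ (⊤ : ℕ∞) (Function.uncurry f) U

/-- Smoothness on the whole plane, for a curried function of two real variables. -/
def Smooth2 (f : ℝ → ℝ → ℝ) : Prop :=
  ContDiff ℝ (⊤ : ℕ∞) (Function.uncurry f)

/-- First component ρ₁ of the curvature one-form ρ = ρ₁dx + ρ₂dy of the symplectic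
connection ∇ = ∂ + Π determined by the functions A, B, C, D in Darboux coordinates. -/
def rho1 (A B C D : ℝ → ℝ → ℝ) : ℝ → ℝ → ℝ := fun x y =>
  (-2) * ((-2) * py (px A) x y - py (py B) x y - px (px D) x y
    + px (fun x' y' => A x' y' * D x' y' - B x' y' * C x' y') x y
    + 3 * py (fun x' y' => A x' y' ^ 2 - B x' y' * D x' y') x y
    + 2 * A x y * px D x y - D x y * px A x y - B x y * px C x y)

/-- Second component ρ₂ of the curvature one-form. -/
def rho2 (A B C D : ℝ → ℝ → ℝ) : ℝ → ℝ → ℝ := fun x y =>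
  (-2) * (2 * py (px D) x y + py (py A) x y + px (px C) x y
    + 3 * px (fun x' y' => A x' y' * C x' y' - D x' y' ^ 2) x y
    - py (fun x' y' => A x' y' * D x' y' - B x' y' * C x' y') x y
    - 2 * D x y * py A x y + A x y * py D x y + C x y * py B x y)

/-- The Cahen–Gutt moment map K(∇) of the symplectic connection ∇ = ∂ + Π. -/
def Kmap (A B C D : ℝ → ℝ → ℝ) : ℝ → ℝ → ℝ := fun x y =>
  3 * py (py (px A)) x y + 3 * py (px (px D)) x y
    + py (py (py B)) x y + px (px (px C)) x y
    - px B x y * py C x y + py B x y * px C x y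
    + 3 * (px A x y * py D x y - py A x y * px D x y)
    + 3 * px (px (fun x' y' => A x' y' * C x' y' - D x' y' ^ 2)) x y
    + 3 * py (py (fun x' y' => B x' y' * D x' y' - A x' y' ^ 2)) x y
    - 3 * py (px (fun x' y' => A x' y' * D x' y' - B x' y' * C x' y')) x y

/-- First component of −H(k), the dx⊗dx⊗dx component of the criticality operator. -/
def E1 (A B C D k : ℝ → ℝ → ℝ) : ℝ → ℝ → ℝ := fun x y =>
  px (px (px k)) x y - 3 * A x y * px (px k) x y - 3 * B x y * py (px k) x y
    + px k x y * py B x y - px B x y * py k x y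

/-- The dy⊗dy⊗dy component of the criticality operator. -/
def E2 (A B C D k : ℝ → ℝ → ℝ) : ℝ → ℝ → ℝ := fun x y =>
  py (py (py k)) x y - 3 * D x y * py (py k) x y - 3 * C x y * py (px k) x y
    + py k x y * px C x y - py C x y * px k x y

/-- The dx⊙dx⊙dy component of the criticality operator. -/
def E3 (A B C D k : ℝ → ℝ → ℝ) : ℝ → ℝ → ℝ := fun x y =>
  py (px (px k)) x y + 2 * D x y * px (px k) x y - B x y * py (py k) x y
    + A x y * py (px k) x y + px A x y * py k x y - py A x y * px k x y

/-- The dx⊙dy⊙dy component of the criticality operator. -/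
def E4 (A B C D k : ℝ → ℝ → ℝ) : ℝ → ℝ → ℝ := fun x y =>
  py (py (px k)) x y + 2 * A x y * py (py k) x y - C x y * px (px k) x y
    + D x y * py (px k) x y + py D x y * px k x y - px D x y * py k x y

/-- ∇ = ∂ + Π is critical symplectic on U: the four components of H(K(∇)) vanish on U. -/
def Critical (A B C D : ℝ → ℝ → ℝ) (U : Set (ℝ × ℝ)) : Prop :=
  ∀ p ∈ U, E1 A B C D (Kmap A B C D) p.1 p.2 = 0 ∧
    E2 A B C D (Kmap A B C D) p.1 p.2 = 0 ∧
    E3 A B C D (Kmap A B C D) p.1 p.2 = 0 ∧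
    E4 A B C D (Kmap A B C D) p.1 p.2 = 0

/-- Ricci component R₁₁. -/
def R11 (A B C D : ℝ → ℝ → ℝ) : ℝ → ℝ → ℝ := fun x y =>
  px A x y + py B x y + 2 * (B x y * D x y - A x y ^ 2)

/-- Ricci component R₂₂. -/
def R22 (A B C D : ℝ → ℝ → ℝ) : ℝ → ℝ → ℝ := fun x y =>
  px C x y + py D x y + 2 * (A x y * C x y - D x y ^ 2)

/-- Ricci component R₁₂ = R₂₁. -/
def R12 (A B C D : ℝ → ℝ → ℝ) : ℝ → ℝ → ℝ := fun x y =>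
  - py A x y - px D x y + A x y * D x y - B x y * C x y

/-- (∇_x Ric)_{xx}, using Γ^x_{xx}=A, Γ^y_{xx}=B, Γ^x_{xy}=−D, Γ^y_{xy}=−A, Γ^x_{yy}=C, Γ^y_{yy}=D. -/
def nxRxx (A B C D : ℝ → ℝ → ℝ) : ℝ → ℝ → ℝ := fun x y =>
  px (R11 A B C D) x y
    - 2 * (A x y * R11 A B C D x y + B x y * R12 A B C D x y)

/-- (∇_y Ric)_{xx}. -/
def nyRxx (A B C D : ℝ → ℝ → ℝ) : ℝ → ℝ → ℝ := fun x y =>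
  py (R11 A B C D) x y
    - 2 * ((-(D x y)) * R11 A B C D x y + (-(A x y)) * R12 A B C D x y)

/-- (∇_x Ric)_{xy}. -/
def nxRxy (A B C D : ℝ → ℝ → ℝ) : ℝ → ℝ → ℝ := fun x y =>
  px (R12 A B C D) x y
    - (A x y * R12 A B C D x y + B x y * R22 A B C D x y)
    - ((-(D x y)) * R11 A B C D x y + (-(A x y)) * R12 A B C D x y)

/-- (∇_y Ric)_{xy}. -/
def nyRxy (A B C D : ℝ → ℝ → ℝ) : ℝ → ℝ → ℝ := fun x y =>
  py (R12 A B C D) x y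
    - ((-(D x y)) * R12 A B C D x y + (-(A x y)) * R22 A B C D x y)
    - (C x y * R11 A B C D x y + D x y * R12 A B C D x y)

/-- (∇_x Ric)_{yy}. -/
def nxRyy (A B C D : ℝ → ℝ → ℝ) : ℝ → ℝ → ℝ := fun x y =>
  px (R22 A B C D) x y
    - 2 * ((-(D x y)) * R12 A B C D x y + (-(A x y)) * R22 A B C D x y)

/-- (∇_y Ric)_{yy}. -/
def nyRyy (A B C D : ℝ → ℝ → ℝ) : ℝ → ℝ → ℝ := fun x y =>
  py (R22 A B C D) x y
    - 2 * (C x y * R12 A B C D x y + D x y * R22 A B C D x y)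

/-- ∇ = ∂ + Π is preferred on U: the symmetrized covariant derivative of Ric vanishes on U. -/
def Preferred (A B C D : ℝ → ℝ → ℝ) (U : Set (ℝ × ℝ)) : Prop :=
  ∀ p ∈ U, nxRxx A B C D p.1 p.2 = 0 ∧
    2 * nxRxy A B C D p.1 p.2 + nyRxx A B C D p.1 p.2 = 0 ∧
    2 * nyRxy A B C D p.1 p.2 + nxRyy A B C D p.1 p.2 = 0 ∧
    nyRyy A B C D p.1 p.2 = 0

/-! ### Calculus of partial derivatives on an open set -/

section Calculus

variable {U : Set (ℝ × ℝ)} {f g : ℝ → ℝ → ℝ}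

lemma SmoothOn2.differentiableAt (hU : IsOpen U) (hf : SmoothOn2 f U) {x y : ℝ}
    (h : (x, y) ∈ U) : DifferentiableAt ℝ (Function.uncurry f) (x, y) :=
  (ContDiffOn.contDiffAt hf (hU.mem_nhds h)).differentiableAt (by simp)

lemma SmoothOn2.hasDerivAt_fderiv_x (hU : IsOpen U) (hf : SmoothOn2 f U) {x y : ℝ}
    (h : (x, y) ∈ U) :
    HasDerivAt (fun s => f s y) (fderiv ℝ (Function.uncurry f) (x, y) (1, 0)) x :=
  HasFDerivAt.comp_hasDerivAt (f := fun s => (s, y)) x (hf.differentiableAt hU h).hasFDerivAt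
    ((hasDerivAt_id x).prodMk (hasDerivAt_const x y))

lemma SmoothOn2.hasDerivAt_fderiv_y (hU : IsOpen U) (hf : SmoothOn2 f U) {x y : ℝ}
    (h : (x, y) ∈ U) :
    HasDerivAt (fun s => f x s) (fderiv ℝ (Function.uncurry f) (x, y) (0, 1)) y :=
  HasFDerivAt.comp_hasDerivAt (f := fun s => (x, s)) y (hf.differentiableAt hU h).hasFDerivAt
    ((hasDerivAt_const y x).prodMk (hasDerivAt_id y))

lemma SmoothOn2.hasDerivAt_x (hU : IsOpen U) (hf : SmoothOn2 f U) {x y : ℝ}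
    (h : (x, y) ∈ U) : HasDerivAt (fun s => f s y) (px f x y) x :=
  (hf.hasDerivAt_fderiv_x hU h).differentiableAt.hasDerivAt

lemma SmoothOn2.hasDerivAt_y (hU : IsOpen U) (hf : SmoothOn2 f U) {x y : ℝ}
    (h : (x, y) ∈ U) : HasDerivAt (fun s => f x s) (py f x y) y :=
  (hf.hasDerivAt_fderiv_y hU h).differentiableAt.hasDerivAt

lemma SmoothOn2.px (hU : IsOpen U) (hf : SmoothOn2 f U) : SmoothOn2 (px f) U :=
  ((ContDiffOn.fderiv_of_isOpen hf hU (m := (⊤ : ℕ∞)) (by simp)).clm_apply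
    (contDiffOn_const (c := ((1 : ℝ), (0 : ℝ))))).congr
    fun p hp => (hf.hasDerivAt_fderiv_x hU (x := p.1) (y := p.2) hp).deriv

lemma SmoothOn2.py (hU : IsOpen U) (hf : SmoothOn2 f U) : SmoothOn2 (py f) U :=
  ((ContDiffOn.fderiv_of_isOpen hf hU (m := (⊤ : ℕ∞)) (by simp)).clm_apply
    (contDiffOn_const (c := ((0 : ℝ), (1 : ℝ))))).congr
    fun p hp => (hf.hasDerivAt_fderiv_y hU (x := p.1) (y := p.2) hp).deriv

lemma px_congr (hU : IsOpen U) (hfg : ∀ x y, (x, y) ∈ U → f x y = g x y) {x y : ℝ}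
    (h : (x, y) ∈ U) : px f x y = px g x y := by
  apply Filter.EventuallyEq.deriv_eq
  have hc : Continuous fun s : ℝ => (s, y) := by fun_prop
  filter_upwards [hc.continuousAt.preimage_mem_nhds (hU.mem_nhds h)] with s hs
  exact hfg s y hs

lemma py_congr (hU : IsOpen U) (hfg : ∀ x y, (x, y) ∈ U → f x y = g x y) {x y : ℝ}
    (h : (x, y) ∈ U) : py f x y = py g x y := by
  apply Filter.EventuallyEq.deriv_eq
  have hc : Continuous fun s : ℝ => (x, s) := by fun_prop
  filter_upwards [hc.continuousAt.preimage_mem_nhds (hU.mem_nhds h)] with s hs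
  exact hfg x s hs

/-- Mixed partial derivatives of a smooth function commute. -/
lemma SmoothOn2.px_py (hU : IsOpen U) (hf : SmoothOn2 f U) {x y : ℝ}
    (h : (x, y) ∈ U) : _root_.px (_root_.py f) x y = _root_.py (_root_.px f) x y := by
  have hF : DifferentiableAt ℝ (fderiv ℝ (Function.uncurry f)) (x, y) :=
    ((ContDiffOn.fderiv_of_isOpen hf hU (m := (⊤ : ℕ∞)) (by simp)).contDiffAt
      (hU.mem_nhds h)).differentiableAt (by simp)
  have hsymm : IsSymmSndFDerivAt ℝ (Function.uncurry f) (x, y) :=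
    (ContDiffOn.contDiffAt hf (hU.mem_nhds h)).isSymmSndFDerivAt (by
      rw [minSmoothness_of_isRCLikeNormedField]
      exact WithTop.coe_le_coe.2 (le_top : (2 : ℕ∞) ≤ ⊤))
  have e1 : _root_.px (_root_.py f) x y
      = fderiv ℝ (fderiv ℝ (Function.uncurry f)) (x, y) (1, 0) (0, 1) := by
    rw [px_congr hU (f := _root_.py f) (g := fun x y => fderiv ℝ (Function.uncurry f) (x, y) (0, 1))
      (fun x y h => (hf.hasDerivAt_fderiv_y hU h).deriv) h]
    have := HasFDerivAt.comp_hasDerivAt (f := fun s => (s, y)) x hF.hasFDerivAt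
      ((hasDerivAt_id x).prodMk (hasDerivAt_const x y))
    simpa [_root_.px] using (this.clm_apply (hasDerivAt_const x ((0 : ℝ), (1 : ℝ)))).deriv
  have e2 : _root_.py (_root_.px f) x y
      = fderiv ℝ (fderiv ℝ (Function.uncurry f)) (x, y) (0, 1) (1, 0) := by
    rw [py_congr hU (f := _root_.px f) (g := fun x y => fderiv ℝ (Function.uncurry f) (x, y) (1, 0))
      (fun x y h => (hf.hasDerivAt_fderiv_x hU h).deriv) h]
    have := HasFDerivAt.comp_hasDerivAt (f := fun s => (x, s)) y hF.hasFDerivAt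
      ((hasDerivAt_const y x).prodMk (hasDerivAt_id y))
    simpa [_root_.py] using (this.clm_apply (hasDerivAt_const y ((1 : ℝ), (0 : ℝ)))).deriv
  rw [e1, e2, hsymm.eq]

lemma SmoothOn2.add (hf : SmoothOn2 f U) (hg : SmoothOn2 g U) :
    SmoothOn2 (fun x y => f x y + g x y) U :=
  ContDiffOn.add hf hg

lemma SmoothOn2.sub (hf : SmoothOn2 f U) (hg : SmoothOn2 g U) :
    SmoothOn2 (fun x y => f x y - g x y) U :=
  ContDiffOn.sub hf hg

lemma SmoothOn2.mul (hf : SmoothOn2 f U) (hg : SmoothOn2 g U) :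
    SmoothOn2 (fun x y => f x y * g x y) U :=
  ContDiffOn.mul hf hg

lemma SmoothOn2.sq (hf : SmoothOn2 f U) : SmoothOn2 (fun x y => f x y ^ 2) U :=
  ContDiffOn.pow hf 2

lemma SmoothOn2.const_mul (r : ℝ) (hf : SmoothOn2 f U) :
    SmoothOn2 (fun x y => r * f x y) U :=
  contDiffOn_const.mul hf

/-- The mixed second derivative of a product, by the Leibniz rule. -/
lemma py_px_mul (hU : IsOpen U) (hf : SmoothOn2 f U) (hg : SmoothOn2 g U) {x y : ℝ}
    (h : (x, y) ∈ U) :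
    py (px fun x y => f x y * g x y) x y
      = py (px f) x y * g x y + px f x y * py g x y
        + (py f x y * px g x y + f x y * py (px g) x y) := by
  rw [py_congr hU (f := px fun x y => f x y * g x y) (g := fun x y => px f x y * g x y + f x y * px g x y)
    (fun x y h => ((hf.hasDerivAt_x hU h).mul (hg.hasDerivAt_x hU h)).deriv) h]
  exact ((((hf.px hU).hasDerivAt_y hU h).mul (hg.hasDerivAt_y hU h)).add
    ((hf.hasDerivAt_y hU h).mul ((hg.px hU).hasDerivAt_y hU h))).deriv

lemma py_px_sub (hU : IsOpen U) (hf : SmoothOn2 f U) (hg : SmoothOn2 g U) {x y : ℝ}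
    (h : (x, y) ∈ U) :
    py (px fun x y => f x y - g x y) x y = py (px f) x y - py (px g) x y := by
  rw [py_congr hU (f := px fun x y => f x y - g x y) (g := fun x y => px f x y - px g x y)
    (fun x y h => ((hf.hasDerivAt_x hU h).sub (hg.hasDerivAt_x hU h)).deriv) h]
  exact (((hf.px hU).hasDerivAt_y hU h).sub ((hg.px hU).hasDerivAt_y hU h)).deriv

lemma py_py_sub_comm (f g : ℝ → ℝ → ℝ) (x y : ℝ) :
    py (py fun x y => f x y - g x y) x y = -py (py fun x y => g x y - f x y) x y := by
  have e : (fun x y => f x y - g x y) = fun x y => -(g x y - f x y) := by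
    funext x y; ring
  rw [e]
  simp only [py, deriv.fun_neg]

end Calculus

/-! ### The curvature one-form and the moment map -/

section Curvature

variable {U : Set (ℝ × ℝ)} {A B C D : ℝ → ℝ → ℝ}

lemma smoothOn2_rho1 (hU : IsOpen U) (hA : SmoothOn2 A U) (hB : SmoothOn2 B U)
    (hC : SmoothOn2 C U) (hD : SmoothOn2 D U) : SmoothOn2 (rho1 A B C D) U :=
  (((((((((hA.px hU).py hU).const_mul (-2)).sub ((hB.py hU).py hU)).sub
    ((hD.px hU).px hU)).add (((hA.mul hD).sub (hB.mul hC)).px hU)).add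
    (((hA.sq.sub (hB.mul hD)).py hU).const_mul 3)).add
    ((hA.const_mul 2).mul (hD.px hU))).sub (hD.mul (hA.px hU))).sub
    (hB.mul (hC.px hU)) |>.const_mul (-2)

lemma smoothOn2_rho2 (hU : IsOpen U) (hA : SmoothOn2 A U) (hB : SmoothOn2 B U)
    (hC : SmoothOn2 C U) (hD : SmoothOn2 D U) : SmoothOn2 (rho2 A B C D) U :=
  (((((((((hD.px hU).py hU).const_mul 2).add ((hA.py hU).py hU)).add
    ((hC.px hU).px hU)).add ((((hA.mul hC).sub hD.sq).px hU).const_mul 3)).sub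
    (((hA.mul hD).sub (hB.mul hC)).py hU)).sub
    ((hD.const_mul 2).mul (hA.py hU))).add (hA.mul (hD.py hU))).add
    (hC.mul (hB.py hU)) |>.const_mul (-2)

/-- The structure equation `dρ = -2 K Ω`, valid for every symplectic connection. -/
lemma px_rho2_sub_py_rho1 (hU : IsOpen U) (hA : SmoothOn2 A U) (hB : SmoothOn2 B U)
    (hC : SmoothOn2 C U) (hD : SmoothOn2 D U) {x y : ℝ} (h : (x, y) ∈ U) :
    px (rho2 A B C D) x y - py (rho1 A B C D) x y = -2 * Kmap A B C D x y := by
  have hQ := (hA.mul hD).sub (hB.mul hC)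
  have e2 := ((((((((((((hD.px hU).py hU).hasDerivAt_x hU h).const_mul 2).add
    (((hA.py hU).py hU).hasDerivAt_x hU h)).add
    (((hC.px hU).px hU).hasDerivAt_x hU h)).add
    (((((hA.mul hC).sub hD.sq).px hU).hasDerivAt_x hU h).const_mul 3)).sub
    ((hQ.py hU).hasDerivAt_x hU h)).sub
    (((hD.hasDerivAt_x hU h).const_mul 2).mul ((hA.py hU).hasDerivAt_x hU h))).add
    ((hA.hasDerivAt_x hU h).mul ((hD.py hU).hasDerivAt_x hU h))).add
    ((hC.hasDerivAt_x hU h).mul ((hB.py hU).hasDerivAt_x hU h))).const_mul (-2)).deriv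
  have e1 := ((((((((((((hA.px hU).py hU).hasDerivAt_y hU h).const_mul (-2)).sub
    (((hB.py hU).py hU).hasDerivAt_y hU h)).sub
    (((hD.px hU).px hU).hasDerivAt_y hU h)).add
    ((hQ.px hU).hasDerivAt_y hU h)).add
    ((((hA.sq.sub (hB.mul hD)).py hU).hasDerivAt_y hU h).const_mul 3)).add
    (((hA.hasDerivAt_y hU h).const_mul 2).mul ((hD.px hU).hasDerivAt_y hU h))).sub
    ((hD.hasDerivAt_y hU h).mul ((hA.px hU).hasDerivAt_y hU h))).sub
    ((hB.hasDerivAt_y hU h).mul ((hC.px hU).hasDerivAt_y hU h))).const_mul (-2)).deriv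
  have hAyy : px (py (py A)) x y = py (py (px A)) x y :=
    ((hA.py hU).px_py hU h).trans (py_congr hU (fun _ _ h => hA.px_py hU h) h)
  have hQxy := py_px_sub hU (hA.mul hD) (hB.mul hC) h
  rw [py_px_mul hU hA hD h, py_px_mul hU hB hC h] at hQxy
  have e2' : px (rho2 A B C D) x y = _ := e2
  have e1' : py (rho1 A B C D) x y = _ := e1
  rw [e2', e1', (hD.px hU).px_py hU h, hAyy, hQ.px_py hU h, hA.px_py hU h, hB.px_py hU h,
    hD.px_py hU h]
  unfold Kmap
  rw [py_py_sub_comm (fun x y => B x y * D x y) (fun x y => A x y ^ 2)]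
  linear_combination -2 * hQxy

lemma smoothOn2_Kmap (hU : IsOpen U) (hA : SmoothOn2 A U) (hB : SmoothOn2 B U)
    (hC : SmoothOn2 C U) (hD : SmoothOn2 D U) : SmoothOn2 (Kmap A B C D) U := by
  -- By the structure equation, `K` is a combination of derivatives of the smooth `ρ₁`, `ρ₂`.
  refine ContDiffOn.congr ((((smoothOn2_rho2 hU hA hB hC hD).px hU).sub
    ((smoothOn2_rho1 hU hA hB hC hD).py hU)).const_mul (-(1 / 2))) fun p hp => ?_
  have := px_rho2_sub_py_rho1 hU hA hB hC hD (x := p.1) (y := p.2) hp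
  change Kmap A B C D p.1 p.2
    = -(1 / 2) * (px (rho2 A B C D) p.1 p.2 - py (rho1 A B C D) p.1 p.2)
  rw [this]
  ring

end Curvature

/-- if K² + ρ(H_K) = c on U, then on {K² ≠ c} the one-form
σ = (c − K²)⁻¹ρ is closed and satisfies dK ∧ σ = Ω. -/
theorem stmt4 (U : Set (ℝ × ℝ)) (hU : IsOpen U) (A B C D : ℝ → ℝ → ℝ)
    (hA : SmoothOn2 A U) (hB : SmoothOn2 B U) (hC : SmoothOn2 C U)
    (hD : SmoothOn2 D U) (c : ℝ)
    (hconst : ∀ p ∈ U,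
      Kmap A B C D p.1 p.2 ^ 2
        + px (Kmap A B C D) p.1 p.2 * rho2 A B C D p.1 p.2
        - py (Kmap A B C D) p.1 p.2 * rho1 A B C D p.1 p.2 = c) :
    ∀ p ∈ U, Kmap A B C D p.1 p.2 ^ 2 ≠ c →
      (px (fun x y => rho2 A B C D x y / (c - Kmap A B C D x y ^ 2)) p.1 p.2
          - py (fun x y => rho1 A B C D x y / (c - Kmap A B C D x y ^ 2)) p.1 p.2 = 0) ∧
      (px (Kmap A B C D) p.1 p.2
            * (rho2 A B C D p.1 p.2 / (c - Kmap A B C D p.1 p.2 ^ 2))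
          - py (Kmap A B C D) p.1 p.2
            * (rho1 A B C D p.1 p.2 / (c - Kmap A B C D p.1 p.2 ^ 2)) = 1) := by
  rintro ⟨x, y⟩ hp hne
  have hK := smoothOn2_Kmap hU hA hB hC hD
  have hc := hconst _ hp
  have hd := px_rho2_sub_py_rho1 hU hA hB hC hD hp
  simp only at hne hc ⊢
  have h0 : c - Kmap A B C D x y ^ 2 ≠ 0 := sub_ne_zero.mpr hne.symm
  have ex := (((smoothOn2_rho2 hU hA hB hC hD).hasDerivAt_x hU hp).div
    (((hK.hasDerivAt_x hU hp).pow 2).const_sub c) h0).deriv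
  have ey := (((smoothOn2_rho1 hU hA hB hC hD).hasDerivAt_y hU hp).div
    (((hK.hasDerivAt_y hU hp).pow 2).const_sub c) h0).deriv
  have ex' : px (fun x y => rho2 A B C D x y / (c - Kmap A B C D x y ^ 2)) x y = _ := ex
  have ey' : py (fun x y => rho1 A B C D x y / (c - Kmap A B C D x y ^ 2)) x y = _ := ey
  constructor
  · rw [ex', ey']
    simp only [Pi.pow_apply]
    rw [← sub_div, div_eq_zero_iff]
    left
    push_cast
    linear_combination (c - Kmap A B C D x y ^ 2) * hd + 2 * Kmap A B C D x y * hc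
  · rw [← mul_div_assoc, ← mul_div_assoc, ← sub_div, div_eq_one_iff_eq h0]
    linear_combination hc
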